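/- Let u be a nonnegative C¹ solution of div A(x,Du) + b(x)|Du|^α ≥ q(x)g(u) in ℝⁿ and let 0 < r₁ < r₂ be real numbers with M(r₁;u) = M(r₂;u) > 0. Then ess inf_{r₁<|x|<r₂} q(x) = 0. -/

import Mathlib

open MeasureTheory Metric Set Filter
open scoped RealInnerProductSpace ENNReal

noncomputable section

abbrev Euc (n : ℕ) := EuclideanSpace ℝ (Fin n)

/-- Weak solution of `div A(x,Dv) + b(x)|Dv|^α ≥ a(x)` on an open set `U`:
for every nonnegative test function `φ ∈ C₀^∞(U)`,
`-∫ A(x,Dv)·Dφ + ∫ b |Dv|^α φ ≥ ∫ a φ`. -/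
def IsWeakSol {n : ℕ} (A : Euc n → Euc n → Euc n) (b : Euc n → ℝ) (α : ℝ)
    (a : Euc n → ℝ) (U : Set (Euc n)) (v : Euc n → ℝ) : Prop :=
  ∀ φ : Euc n → ℝ, ContDiff ℝ (⊤ : ℕ∞) φ → HasCompactSupport φ → tsupport φ ⊆ U →
    (∀ x, 0 ≤ φ x) →
    (∫ x in U, a x * φ x) ≤
      (-(∫ x in U, ⟪A x (gradient v x), gradient φ x⟫)) +
        ∫ x in U, b x * ‖gradient v x‖ ^ α * φ x

/-- Structural conditions on `A`: measurability, coercivity and growth. -/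
def StructCond {n : ℕ} (A : Euc n → Euc n → Euc n) (p C₁ C₂ : ℝ) : Prop :=
  Measurable (Function.uncurry A) ∧
    ∀ x ζ : Euc n, C₁ * ‖ζ‖ ^ p ≤ ⟪ζ, A x ζ⟫ ∧ ‖A x ζ‖ ≤ C₂ * ‖ζ‖ ^ (p - 1)

/-- Locally bounded function on `ℝⁿ`. -/
def LocBdd {n : ℕ} (b : Euc n → ℝ) : Prop :=
  ∀ K : Set (Euc n), IsCompact K → ∃ C, ∀ x ∈ K, b x ≤ C

/-- `M(r; u) = max_{|x| = r} u x`. -/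
def sphMax {n : ℕ} (u : Euc n → ℝ) (r : ℝ) : ℝ := sSup (u '' Metric.sphere (0 : Euc n) r)

/-- `g_θ(t) = inf_{s ∈ (t/θ, θ t)} g s`. -/
def ginf (g : ℝ → ℝ) (θ t : ℝ) : ℝ := sInf (g '' Set.Ioo (t / θ) (θ * t))

/-- The open annulus `{x : r₁ < |x| < r₂}`. -/
def Ann (n : ℕ) (r₁ r₂ : ℝ) : Set (Euc n) := {x : Euc n | r₁ < ‖x‖ ∧ ‖x‖ < r₂}

/-- `q_σ(r) = ess inf_{r/σ < |x| < σ r} q x`. -/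
def qinf {n : ℕ} (q : Euc n → ℝ) (σ r : ℝ) : ℝ :=
  essInf q (volume.restrict (Ann n (r / σ) (σ * r)))

/-- `f_σ(r) = q_σ(r) / (1 + r q_σ(r)^{(α-p+1)/α} ess sup_{r/σ<|x|<σr} b^{(p-1)/α})`. -/
def fdef {n : ℕ} (q b : Euc n → ℝ) (p α σ r : ℝ) : ℝ :=
  qinf q σ r /
    (1 + r * qinf q σ r ^ ((α - p + 1) / α) *
      essSup (fun x => b x ^ ((p - 1) / α)) (volume.restrict (Ann n (r / σ) (σ * r))))

open scoped Topology Convolution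

lemma mollify {n : ℕ} (φ : Euc n → ℝ) (hφ : ContDiff ℝ 1 φ) (hc : HasCompactSupport φ)
    (h0 : ∀ x, 0 ≤ φ x) (ε : ℝ) (hε : 0 < ε) :
    ∃ ψ : Euc n → ℝ, ContDiff ℝ (⊤ : ℕ∞) ψ ∧ (∀ x, 0 ≤ ψ x) ∧
      (∀ x ∉ cthickening 1 (tsupport φ), ψ x = 0) ∧
      (∀ x, ‖ψ x - φ x‖ ≤ ε) ∧ ∀ x, ‖gradient ψ x - gradient φ x‖ ≤ ε := by
  have u1 : UniformContinuous φ := hc.uniformContinuous_of_continuous hφ.continuous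
  have hcd : Continuous (fderiv ℝ φ) := hφ.continuous_fderiv one_ne_zero
  have u2 : UniformContinuous (fderiv ℝ φ) :=
    (hc.fderiv (𝕜 := ℝ)).uniformContinuous_of_continuous hcd
  obtain ⟨d1, hd1, h1⟩ := Metric.uniformContinuous_iff.1 u1 ε hε
  obtain ⟨d2, hd2, h2⟩ := Metric.uniformContinuous_iff.1 u2 ε hε
  set d := min 1 (min d1 d2) with hd
  have hdpos : 0 < d := by positivity
  let B : ContDiffBump (0 : Euc n) := ⟨d / 2, d, by positivity, by linarith⟩
  have hBd : B.rOut = d := rfl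
  refine ⟨B.normed volume ⋆[ContinuousLinearMap.lsmul ℝ ℝ, volume] φ, ?_, ?_, ?_, ?_, ?_⟩
  · exact B.hasCompactSupport_normed.contDiff_convolution_left _ B.contDiff_normed
      hφ.continuous.locallyIntegrable
  · intro x
    exact integral_nonneg fun t => mul_nonneg (B.nonneg_normed _) (h0 _)
  · intro x hx
    apply integral_eq_zero_of_ae
    filter_upwards with t
    by_contra hne
    simp only [ContinuousLinearMap.lsmul_apply, smul_eq_mul, Pi.zero_apply, mul_eq_zero, not_or] at hne
    have ht : t ∈ ball (0 : Euc n) d := by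
      have := B.support_normed_eq (μ := volume)
      rw [hBd] at this
      rw [← this]; exact hne.1
    have hxt : x - t ∈ tsupport φ := subset_tsupport _ hne.2
    apply hx
    apply mem_cthickening_of_dist_le x (x - t) 1 _ hxt
    rw [dist_eq_norm]; simp only [sub_sub_cancel]
    rw [mem_ball_zero_iff] at ht
    have : d ≤ 1 := min_le_left _ _
    linarith
  · intro x
    rw [← dist_eq_norm]
    apply B.dist_normed_convolution_le hφ.continuous.aestronglyMeasurable
    intro y hy
    rw [hBd, mem_ball] at hy
    exact (h1 (hy.trans_le ((min_le_right _ _).trans (min_le_left _ _)))).le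
  · intro x
    have hder := hc.hasFDerivAt_convolution_right (μ := volume) (ContinuousLinearMap.lsmul ℝ ℝ)
      (f := B.normed volume) (B.continuous_normed.locallyIntegrable) hφ x
    unfold gradient
    rw [← map_sub, LinearIsometryEquiv.norm_map, ← dist_eq_norm, hder.fderiv]
    have := B.dist_normed_convolution_le (μ := volume) (g := fderiv ℝ φ) (x₀ := x) (ε := ε)
      hcd.aestronglyMeasurable (by
        intro y hy
        rw [hBd, mem_ball] at hy
        exact (h2 (hy.trans_le ((min_le_right _ _).trans (min_le_right _ _)))).le)
    convert this using 2
    simp only [convolution]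
    rfl

lemma tendsto_inner_aux {n : ℕ} {V : Type*} [NormedAddCommGroup V] [InnerProductSpace ℝ V]
    (F : Euc n → V) (hF : LocallyIntegrable F) (K : Set (Euc n)) (hK : IsCompact K)
    (ζ : ℕ → Euc n → V) (ζ' : Euc n → V) (hζ : ∀ j, Continuous (ζ j)) (hζ' : Continuous ζ')
    (h : ∀ j x, ‖ζ j x - ζ' x‖ ≤ 1 / ((j : ℝ) + 1)) (h0 : ∀ j, ∀ x ∉ K, ζ j x = 0) :
    Tendsto (fun j => ∫ x, ⟪F x, ζ j x⟫) atTop (𝓝 (∫ x, ⟪F x, ζ' x⟫)) := by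
  obtain ⟨C, hC⟩ := hK.exists_bound_of_continuousOn hζ'.continuousOn
  have hFK : IntegrableOn F K := hF.integrableOn_isCompact hK
  apply tendsto_integral_of_dominated_convergence (K.indicator (fun x => ‖F x‖ * (C + 1)))
  · intro j
    exact hF.aestronglyMeasurable.inner (hζ j).aestronglyMeasurable
  · rw [integrable_indicator_iff hK.measurableSet]
    exact hFK.norm.mul_const _
  · intro j
    filter_upwards with x
    by_cases hx : x ∈ K
    · rw [indicator_of_mem hx]
      refine (norm_inner_le_norm _ _).trans (mul_le_mul_of_nonneg_left ?_ (norm_nonneg _))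
      have h1 := h j x
      have h2 : 1 / ((j : ℝ) + 1) ≤ 1 := by
        rw [div_le_one (by positivity)]; linarith [(Nat.cast_nonneg j : (0:ℝ) ≤ j)]
      have h3 : ‖ζ j x‖ ≤ ‖ζ j x - ζ' x‖ + ‖ζ' x‖ := by
        simpa using norm_add_le (ζ j x - ζ' x) (ζ' x)
      linarith [hC x hx]
    · rw [indicator_of_notMem hx, h0 j x hx]; simp
  · filter_upwards with x
    apply Tendsto.inner tendsto_const_nhds
    rw [tendsto_iff_norm_sub_tendsto_zero]
    exact squeeze_zero (fun _ => norm_nonneg _) (fun j => h j x) tendsto_one_div_add_atTop_nhds_zero_nat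

lemma test_C1 {n : ℕ} (a c : Euc n → ℝ) (F : Euc n → Euc n) (ha : LocallyIntegrable a)
    (hcc : LocallyIntegrable c) (hF : LocallyIntegrable F)
    (H : ∀ φ : Euc n → ℝ, ContDiff ℝ (⊤ : ℕ∞) φ → HasCompactSupport φ → (∀ x, 0 ≤ φ x) →
      (∫ x, a x * φ x) ≤ (-(∫ x, ⟪F x, gradient φ x⟫)) + ∫ x, c x * φ x)
    (φ : Euc n → ℝ) (hφ : ContDiff ℝ 1 φ) (hc : HasCompactSupport φ) (h0 : ∀ x, 0 ≤ φ x) :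
    (∫ x, a x * φ x) ≤ (-(∫ x, ⟪F x, gradient φ x⟫)) + ∫ x, c x * φ x := by
  choose ψ h1 h2 h3 h4 h5 using fun j : ℕ =>
    mollify φ hφ hc h0 (1 / ((j : ℝ) + 1)) (by positivity)
  set K := cthickening 1 (tsupport φ)
  have hK : IsCompact K := hc.isCompact.cthickening
  have gcont : ∀ f : Euc n → ℝ, ContDiff ℝ 1 f → Continuous (gradient f) := by
    intro f hf
    exact (LinearIsometryEquiv.continuous _).comp (hf.continuous_fderiv one_ne_zero)
  have h1' : ∀ j, ContDiff ℝ 1 (ψ j) := fun j => (h1 j).of_le (by exact_mod_cast le_top)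
  have hg0 : ∀ j, ∀ x ∉ K, gradient (ψ j) x = 0 := by
    intro j x hx
    have : ψ j =ᶠ[𝓝 x] fun _ => (0:ℝ) := by
      filter_upwards [hK.isClosed.isOpen_compl.mem_nhds hx] with y hy
      exact h3 j y hy
    unfold gradient
    rw [this.fderiv_eq]; simp
  have t1 := tendsto_inner_aux a ha K hK ψ φ (fun j => (h1' j).continuous) hφ.continuous h4 h3
  have t2 := tendsto_inner_aux F hF K hK (fun j => gradient (ψ j)) (gradient φ)
    (fun j => gcont _ (h1' j)) (gcont _ hφ) h5 hg0
  have t3 := tendsto_inner_aux c hcc K hK ψ φ (fun j => (h1' j).continuous) hφ.continuous h4 h3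
  simp only [RCLike.inner_apply, conj_trivial] at t1 t3
  simp only [mul_comm] at t1 t3
  refine le_of_tendsto_of_tendsto' (by simpa only [mul_comm] using t1)
    (t2.neg.add (by simpa only [mul_comm] using t3)) fun j => ?_
  have := H (ψ j) (h1 j) (HasCompactSupport.intro hK (h3 j)) (h2 j)
  simpa only [mul_comm] using this

lemma test_local {n : ℕ} (a c : Euc n → ℝ) (F : Euc n → Euc n) (ha : LocallyIntegrable a)
    (hcc : LocallyIntegrable c) (hF : LocallyIntegrable F)
    (H : ∀ φ : Euc n → ℝ, ContDiff ℝ (⊤ : ℕ∞) φ → HasCompactSupport φ → (∀ x, 0 ≤ φ x) →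
      (∫ x, a x * φ x) ≤ (-(∫ x, ⟪F x, gradient φ x⟫)) + ∫ x, c x * φ x)
    (S K : Set (Euc n)) (hS : IsOpen S) (hK : IsCompact K) (hKS : K ⊆ S)
    (f : Euc n → ℝ) (hf : ContDiff ℝ 1 f) (h0 : ∀ x ∈ S, 0 ≤ f x) (hz : ∀ x ∈ S, x ∉ K → f x = 0) :
    (∫ x in S, a x * f x) ≤ (-(∫ x in S, ⟪F x, gradient f x⟫)) + ∫ x in S, c x * f x := by
  have hzK : ∀ x ∉ K, S.indicator f x = 0 := by
    intro x hx
    by_cases hxS : x ∈ S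
    · rw [indicator_of_mem hxS, hz x hxS hx]
    · exact indicator_of_notMem hxS _
  have e1 : ∀ x ∈ S, S.indicator f =ᶠ[𝓝 x] f := by
    intro x hx
    filter_upwards [hS.mem_nhds hx] with y hy using indicator_of_mem hy _
  have e2 : ∀ x ∉ K, S.indicator f =ᶠ[𝓝 x] fun _ => (0:ℝ) := by
    intro x hx
    filter_upwards [hK.isClosed.isOpen_compl.mem_nhds hx] with y hy using hzK y hy
  have hC : ContDiff ℝ 1 (S.indicator f) := by
    rw [contDiff_iff_contDiffAt]
    intro x
    by_cases hx : x ∈ S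
    · exact hf.contDiffAt.congr_of_eventuallyEq (e1 x hx)
    · exact contDiffAt_const.congr_of_eventuallyEq (e2 x (fun h => hx (hKS h)))
  have key := test_C1 a c F ha hcc hF H _ hC (HasCompactSupport.intro hK hzK)
    (fun x => indicator_nonneg h0 x)
  have i1 : ∀ a : Euc n → ℝ, ∫ x in S, a x * f x = ∫ x, a x * S.indicator f x := by
    intro a
    rw [← integral_indicator hS.measurableSet]
    congr 1; ext x
    by_cases hx : x ∈ S <;> simp [hx]
  have i2 : ∫ x in S, ⟪F x, gradient f x⟫ = ∫ x, ⟪F x, gradient (S.indicator f) x⟫ := by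
    rw [← integral_indicator hS.measurableSet]
    congr 1; ext x
    by_cases hx : x ∈ S
    · simp only [hx, indicator_of_mem, gradient, (e1 x hx).fderiv_eq]
    · simp only [hx, not_false_eq_true, indicator_of_notMem, gradient, (e2 x (fun h => hx (hKS h))).fderiv_eq]
      simp
  rw [i1, i1, i2]; exact key

/-- positive part power -/
def pp (s t : ℝ) : ℝ := (max t 0) ^ s

lemma pp_hasDerivAt {s : ℝ} (hs : 1 < s) (t : ℝ) : HasDerivAt (pp s) (s * pp (s - 1) t) t := by
  unfold pp
  rcases lt_trichotomy t 0 with h | h | h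
  · have : (fun t : ℝ => (max t 0) ^ s) =ᶠ[𝓝 t] fun _ => 0 := by
      filter_upwards [Iio_mem_nhds h] with y hy
      rw [max_eq_right (le_of_lt hy), Real.zero_rpow (by linarith)]
    rw [max_eq_right h.le, Real.zero_rpow (by linarith), mul_zero]
    exact (hasDerivAt_const t (0:ℝ)).congr_of_eventuallyEq this
  · subst h
    rw [max_self, Real.zero_rpow (by linarith), mul_zero]
    have h1 : HasDerivAt (fun t : ℝ => |t| ^ s) 0 0 := by
      have := hasDerivAt_abs_rpow 0 hs
      simpa using this
    rw [hasDerivAt_iff_isLittleO] at h1 ⊢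
    refine Asymptotics.IsBigO.trans_isLittleO ?_ h1
    apply Asymptotics.IsBigO.of_bound 1
    filter_upwards with y
    simp only [max_self, abs_zero, Real.zero_rpow (by linarith : s ≠ 0), sub_zero, smul_zero, one_mul]
    rw [Real.norm_of_nonneg (by positivity), Real.norm_of_nonneg (by positivity)]
    exact Real.rpow_le_rpow (le_max_right _ _) (max_le (le_abs_self _) (abs_nonneg _)) (by linarith)
  · have : (fun t : ℝ => (max t 0) ^ s) =ᶠ[𝓝 t] fun t => t ^ s := by
      filter_upwards [Ioi_mem_nhds h] with y hy
      rw [max_eq_left (le_of_lt hy)]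
    rw [max_eq_left h.le]
    exact (Real.hasDerivAt_rpow_const (Or.inl h.ne')).congr_of_eventuallyEq this

lemma pp_cont {s : ℝ} (hs : 0 ≤ s) : Continuous (pp s) :=
  (continuous_id.max continuous_const).rpow_const fun _ => Or.inr hs

lemma pp_nonneg (s t : ℝ) : 0 ≤ pp s t := Real.rpow_nonneg (le_max_right _ _) _

lemma pp_zero {s t : ℝ} (hs : s ≠ 0) (ht : t ≤ 0) : pp s t = 0 := by
  unfold pp; rw [max_eq_right ht, Real.zero_rpow hs]

lemma pp_contDiff {s : ℝ} (hs : 1 < s) : ContDiff ℝ 1 (pp s) := by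
  rw [contDiff_one_iff_deriv]
  refine ⟨fun t => (pp_hasDerivAt hs t).differentiableAt, ?_⟩
  have : deriv (pp s) = fun t => s * pp (s - 1) t := funext fun t => (pp_hasDerivAt hs t).deriv
  rw [this]
  exact continuous_const.mul (pp_cont (by linarith))

lemma pp_grad {n : ℕ} {s : ℝ} (hs : 1 < s) (v : Euc n → ℝ) (hv : ContDiff ℝ 1 v) (x : Euc n) :
    gradient (fun x => pp s (v x)) x = (s * pp (s - 1) (v x)) • gradient v x := by
  have h := (pp_hasDerivAt hs (v x)).comp_hasFDerivAt x
    ((hv.differentiable one_ne_zero) x).hasFDerivAt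
  unfold gradient
  have : fderiv ℝ (fun x => pp s (v x)) x = (s * pp (s - 1) (v x)) • fderiv ℝ v x := h.fderiv
  rw [this]; simp

lemma grad_cont {n : ℕ} (f : Euc n → ℝ) (hf : ContDiff ℝ 1 f) : Continuous (gradient f) :=
  (LinearIsometryEquiv.continuous _).comp (hf.continuous_fderiv one_ne_zero)

lemma young_aux {p B c w d : ℝ} (hp : 1 < p) (hB : 0 ≤ B) (hc : 0 < c) (hw : 0 ≤ w) (hd : 0 ≤ d) :
    B * w * d ^ (p - 1) ≤ c * d ^ p + (B * (B / c) ^ (p - 1)) * w ^ p := by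
  have e : ∀ t : ℝ, 0 ≤ t → t ^ p = t * t ^ (p - 1) := by
    intro t ht
    rcases ht.eq_or_lt with h | h
    · rw [← h, Real.zero_rpow (by linarith), zero_mul]
    · rw [Real.rpow_sub_one h.ne']; field_simp
  by_cases h : B * w ≤ c * d
  · have h1 : B * w * d ^ (p - 1) ≤ c * d * d ^ (p - 1) :=
      mul_le_mul_of_nonneg_right h (by positivity)
    have h2 : 0 ≤ (B * (B / c) ^ (p - 1)) * w ^ p := by positivity
    rw [e d hd]; nlinarith
  · push Not at h
    have h1 : d ≤ B / c * w := by
      rw [div_mul_eq_mul_div, le_div_iff₀ hc]; linarith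
    have h2 : d ^ (p - 1) ≤ (B / c) ^ (p - 1) * w ^ (p - 1) := by
      rw [← Real.mul_rpow (by positivity) hw]
      exact Real.rpow_le_rpow hd h1 (by linarith)
    have h3 : 0 ≤ c * d ^ p := by positivity
    have h4 := mul_le_mul_of_nonneg_left h2 (by positivity : 0 ≤ B * w)
    rw [e w hw]; nlinarith

lemma young_aux2 {p w d : ℝ} (hp : 1 < p) (hw : 0 ≤ w) (hd : 0 ≤ d) :
    w ^ (p - 1) * d ≤ w ^ p + d ^ p := by
  have := young_aux hp zero_le_one one_pos hd hw
  simp at this; linarith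

lemma split_aux {s t τ : ℝ} (hs : 1 < s) (ht : 0 ≤ t) (hτ : 0 ≤ τ) :
    τ / 2 * t ^ (s - 1) ≤ t ^ s / 2 + τ ^ s := by
  have e : ∀ t : ℝ, 0 ≤ t → t ^ s = t * t ^ (s - 1) := by
    intro t ht
    rcases ht.eq_or_lt with h | h
    · rw [← h, Real.zero_rpow (by linarith), zero_mul]
    · rw [Real.rpow_sub_one h.ne']; field_simp
  have a1 : 0 ≤ τ ^ s := by positivity
  have a2 : 0 ≤ t ^ s := by positivity
  by_cases h : τ ≤ t
  · have : τ * t ^ (s - 1) ≤ t * t ^ (s-1) := mul_le_mul_of_nonneg_right h (by positivity)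
    rw [e t ht] at *; linarith
  · push Not at h
    have h2 : t ^ (s - 1) ≤ τ ^ (s - 1) := Real.rpow_le_rpow ht h.le (by linarith)
    have := mul_le_mul_of_nonneg_left h2 hτ
    have h3 : 0 ≤ τ * τ ^ (s - 1) := by positivity
    rw [e τ hτ]; linarith

lemma gns_local {n : ℕ} (hn : 2 ≤ n) : ∃ (C : NNReal) (θ : ℝ), 0 < θ ∧
    ∀ (S K E : Set (Euc n)) (f : Euc n → ℝ), IsOpen S → IsCompact K → K ⊆ S → ContDiff ℝ 1 f →
      (∀ x ∈ S, x ∉ K → f x = 0) → MeasurableSet E → E ⊆ S →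
      ∫⁻ x in E, ‖f x‖ₑ ≤ C * volume E ^ θ * ∫⁻ x in S, ‖gradient f x‖ₑ := by
  set q : NNReal := NNReal.conjExponent n with hq
  have hn1 : (1 : NNReal) < n := by exact_mod_cast (by omega : 1 < n)
  have hconj : NNReal.HolderConjugate (n : NNReal) q := NNReal.HolderConjugate.conjExponent hn1
  have hq1 : 1 < q := hconj.symm.lt
  refine ⟨eLpNormLESNormFDerivOneConst (volume : Measure (Euc n)) q, 1 - 1 / (q : ℝ), ?_, ?_⟩
  · have : (1:ℝ) < q := by exact_mod_cast hq1
    have : 1 / (q:ℝ) < 1 := by rw [div_lt_one (by linarith)]; exact this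
    linarith
  intro S K E f hS hK hKS hf hz hE hES
  have hzK : ∀ x ∉ K, S.indicator f x = 0 := by
    intro x hx
    by_cases hxS : x ∈ S
    · rw [indicator_of_mem hxS, hz x hxS hx]
    · exact indicator_of_notMem hxS _
  have e1 : ∀ x ∈ S, S.indicator f =ᶠ[𝓝 x] f := by
    intro x hx
    filter_upwards [hS.mem_nhds hx] with y hy using indicator_of_mem hy _
  have e2 : ∀ x ∉ K, S.indicator f =ᶠ[𝓝 x] fun _ => (0:ℝ) := by
    intro x hx
    filter_upwards [hK.isClosed.isOpen_compl.mem_nhds hx] with y hy using hzK y hy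
  have hC : ContDiff ℝ 1 (S.indicator f) := by
    rw [contDiff_iff_contDiffAt]
    intro x
    by_cases hx : x ∈ S
    · exact hf.contDiffAt.congr_of_eventuallyEq (e1 x hx)
    · exact contDiffAt_const.congr_of_eventuallyEq (e2 x (fun h => hx (hKS h)))
  have key := eLpNorm_le_eLpNorm_fderiv_one (volume : Measure (Euc n)) hC
    (HasCompactSupport.intro hK hzK) (p := q) (by simpa using hconj)
  have h1 : ∫⁻ x in E, ‖f x‖ₑ = eLpNorm (S.indicator f) 1 (volume.restrict E) := by
    rw [eLpNorm_one_eq_lintegral_enorm]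
    apply setLIntegral_congr_fun hE
    intro x hx
    simp [hES hx]
  have h2 : ∫⁻ x in S, ‖gradient f x‖ₑ = eLpNorm (fderiv ℝ (S.indicator f)) 1 volume := by
    rw [eLpNorm_one_eq_lintegral_enorm, ← lintegral_indicator hS.measurableSet]
    congr 1; ext x
    by_cases hx : x ∈ S
    · simp only [hx, indicator_of_mem, gradient, (e1 x hx).fderiv_eq, LinearIsometryEquiv.enorm_map]
    · simp only [hx, not_false_eq_true, indicator_of_notMem, (e2 x (fun h => hx (hKS h))).fderiv_eq]
      simp only [fderiv_fun_const, Pi.zero_apply]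
      rw [← ofReal_norm, norm_zero, ENNReal.ofReal_zero]
  have h3 := eLpNorm_le_eLpNorm_mul_rpow_measure_univ (μ := volume.restrict E) (f := S.indicator f)
    (p := 1) (q := (q : ℝ≥0∞)) (by exact_mod_cast hq1.le) hC.continuous.aestronglyMeasurable
  rw [h1, h2]
  simp only [Measure.restrict_apply_univ, ENNReal.toReal_one, ENNReal.coe_toReal] at h3
  norm_num at h3
  have h4 : eLpNorm (S.indicator f) q (volume.restrict E) ≤ eLpNorm (S.indicator f) q volume :=
    eLpNorm_mono_measure _ Measure.restrict_le_self
  calc _ ≤ _ := h3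
    _ ≤ (eLpNormLESNormFDerivOneConst (volume : Measure (Euc n)) q * eLpNorm (fderiv ℝ (S.indicator f)) 1 volume) * _ := by
        gcongr; exact h4.trans key
    _ = _ := by rw [one_div]; ring

lemma bdd_int {n : ℕ} {S : Set (Euc n)} (hS : Bornology.IsBounded S) (f : Euc n → ℝ)
    (hf : Continuous f) : IntegrableOn f S :=
  (hf.continuousOn.integrableOn_compact hS.isCompact_closure).mono_set subset_closure

lemma bdd_int2 {n : ℕ} {S : Set (Euc n)} (hS : Bornology.IsBounded S) (f : Euc n → ℝ)
    (hf : LocallyIntegrable f) : IntegrableOn f S :=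
  (hf.integrableOn_isCompact hS.isCompact_closure).mono_set subset_closure

lemma locint {n : ℕ} {V : Type*} [NormedAddCommGroup V] (f : Euc n → V)
    (hm : AEStronglyMeasurable f volume)
    (hb : ∀ K, IsCompact K → ∃ C, ∀ x ∈ K, ‖f x‖ ≤ C) : LocallyIntegrable f := by
  rw [locallyIntegrable_iff]
  intro K hK
  obtain ⟨C, hC⟩ := hb K hK
  apply Measure.integrableOn_of_bounded hK.measure_lt_top.ne hm (M := C)
  filter_upwards [ae_restrict_mem hK.measurableSet] with x hx using hC x hx

lemma wmp_core {n : ℕ} (hn : 2 ≤ n) {p C₁ B r m₀ : ℝ} (hp : 1 < p) (hC₁ : 0 < C₁) (hB : 0 ≤ B)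
    (u : Euc n → ℝ) (hu : ContDiff ℝ 1 u)
    (hsph : ∀ x ∈ sphere (0 : Euc n) r, u x ≤ m₀)
    (H : ∀ k, m₀ < k → 2 * C₁ * ∫ x in ball (0 : Euc n) r, pp 1 (u x - k) * ‖gradient u x‖ ^ p ≤
      B * ∫ x in ball (0 : Euc n) r, pp 2 (u x - k) * ‖gradient u x‖ ^ (p - 1)) :
    ∀ x ∈ closedBall (0 : Euc n) r, u x ≤ m₀ := by
  by_contra hcon
  push Not at hcon
  obtain ⟨y, hy, hym⟩ := hcon
  obtain ⟨z, hz, hzmax⟩ := (isCompact_closedBall (0 : Euc n) r).exists_isMaxOn ⟨y, hy⟩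
    hu.continuous.continuousOn
  have hzm : m₀ < u z := hym.trans_le (hzmax hy)
  set S := ball (0 : Euc n) r with hS
  have hSb : Bornology.IsBounded S := isBounded_ball
  have hSm : MeasurableSet S := measurableSet_ball
  have hgc : Continuous (gradient u) := grad_cont u hu
  have inS : ∀ x ∈ closedBall (0 : Euc n) r, m₀ < u x → x ∈ S := by
    intro x hx hx2
    rw [mem_closedBall] at hx
    rcases hx.lt_or_eq with h | h
    · exact mem_ball.2 h
    · exact absurd (hsph x (mem_sphere.2 h)) (not_le.2 hx2)
  set δ := (u z - m₀) / 2 with hδ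
  have hδ0 : 0 < δ := by rw [hδ]; linarith
  let k : ℕ → ℝ := fun j => u z - δ / ((j : ℝ) + 1)
  have hkz : ∀ j, k j < u z := fun j => by
    have : 0 < δ / ((j : ℝ) + 1) := by positivity
    simp only [k]; linarith
  have hkm : ∀ j, m₀ < k j := fun j => by
    have : δ / ((j : ℝ) + 1) ≤ δ := div_le_self hδ0.le (by linarith [(Nat.cast_nonneg j : (0:ℝ) ≤ j)])
    simp only [k]; linarith
  let E : ℕ → Set (Euc n) := fun j => S ∩ ({x | k j < u x} ∩ {x | gradient u x ≠ 0})
  have hEm : ∀ j, MeasurableSet (E j) := fun j =>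
    hSm.inter ((isOpen_lt continuous_const hu.continuous).measurableSet.inter
      (isOpen_ne_fun hgc continuous_const).measurableSet)
  have hanti : Antitone E := by
    intro i j hij x hx
    refine ⟨hx.1, ?_, hx.2.2⟩
    have h1 : k j < u x := hx.2.1
    have h2 : δ / ((j : ℝ) + 1) ≤ δ / ((i : ℝ) + 1) := by gcongr
    show u z - δ / ((i : ℝ) + 1) < u x
    simp only [k] at h1; linarith
  have hempty : ⋂ j, E j = ∅ := by
    rw [eq_empty_iff_forall_notMem]
    intro x hx
    rw [mem_iInter] at hx
    have hxS := (hx 0).1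
    have hge : u z ≤ u x := by
      have t : Tendsto k atTop (𝓝 (u z - 0)) := by
        apply tendsto_const_nhds.sub
        have := (tendsto_one_div_add_atTop_nhds_zero_nat (𝕜 := ℝ)).const_mul δ
        simpa [div_eq_mul_inv] using this
      rw [sub_zero] at t
      exact le_of_tendsto' t fun j => (hx j).2.1.le
    have hloc : IsLocalMax u x := by
      filter_upwards [isOpen_ball.mem_nhds hxS] with w hw
      exact (hzmax (ball_subset_closedBall hw)).trans hge
    apply (hx 0).2.2
    show gradient u x = 0
    unfold gradient; rw [hloc.fderiv_eq_zero]; simp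
  have hvol : Tendsto (fun j => volume (E j)) atTop (𝓝 0) := by
    have := tendsto_measure_iInter_atTop (μ := volume) (fun j => (hEm j).nullMeasurableSet) hanti
      ⟨0, ((measure_mono inter_subset_left).trans_lt (hSb.measure_lt_top)).ne⟩
    rwa [hempty, measure_empty] at this
  obtain ⟨CG, θ, hθ, hG⟩ := gns_local hn
  set C' := B * (B / C₁) ^ (p - 1) with hC'
  have hC'0 : 0 ≤ C' := by positivity
  set D := (p + 1) * (1 + C' / C₁) with hD
  have hD0 : 0 ≤ D := by positivity
  have hsmall : Tendsto (fun j => (CG : ℝ≥0∞) * volume (E j) ^ θ * ENNReal.ofReal D) atTop (𝓝 0) := by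
    have t1 : Tendsto (fun j => volume (E j) ^ θ) atTop (𝓝 0) := by
      have := (ENNReal.continuous_rpow_const (y := θ)).tendsto 0 |>.comp hvol
      simpa [ENNReal.zero_rpow_of_pos hθ, Function.comp_def] using this
    have t2 := ENNReal.Tendsto.const_mul t1 (Or.inr (ENNReal.coe_ne_top (r := CG)))
    have t3 := ENNReal.Tendsto.mul_const t2 (Or.inr (ENNReal.ofReal_ne_top (r := D)))
    simpa using t3
  obtain ⟨j, hj⟩ := (hsmall.eventually_lt_const (by norm_num : (0:ℝ≥0∞) < 1)).exists
  set κ := k j with hκ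
  have hHk := H κ (hkm j)
  -- functions
  have hw0 : ∀ x, 0 ≤ pp 1 (u x - κ) := fun x => pp_nonneg _ _
  have hv : Continuous fun x => u x - κ := hu.continuous.sub continuous_const
  have hvd : ContDiff ℝ 1 fun x => u x - κ := hu.sub contDiff_const
  have hgv : ∀ x, gradient (fun x => u x - κ) x = gradient u x := by
    intro x; unfold gradient; rw [fderiv_sub_const]
  have cpp : ∀ s : ℝ, 0 ≤ s → Continuous fun x => pp s (u x - κ) := fun s hs => (pp_cont hs).comp hv
  have cgr : ∀ s : ℝ, 0 ≤ s → Continuous fun x => ‖gradient u x‖ ^ s := fun s hs =>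
    hgc.norm.rpow_const fun _ => Or.inr hs
  have powmul : ∀ (s t : ℝ) (x : ℝ), 0 < s → 0 < t → pp (s + t) x = pp s x * pp t x := by
    intro s t x hs ht
    unfold pp
    rw [Real.rpow_add_of_nonneg (le_max_right _ _) hs.le ht.le]
  have powpow : ∀ (s x : ℝ), (pp 1 x) ^ s = pp s x := by
    intro s x; unfold pp; rw [Real.rpow_one]
  let N1 : Euc n → ℝ := (E j).indicator fun x => pp (p + 1) (u x - κ)
  have iN : IntegrableOn N1 S := (bdd_int hSb _ (cpp (p+1) (by linarith))).indicator (hEm j)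
  have iJ : IntegrableOn (fun x => pp 1 (u x - κ) * ‖gradient u x‖ ^ p) S :=
    bdd_int hSb _ ((cpp 1 zero_le_one).mul (cgr p (by linarith)))
  have i2 : IntegrableOn (fun x => pp 2 (u x - κ) * ‖gradient u x‖ ^ (p - 1)) S :=
    bdd_int hSb _ ((cpp 2 zero_le_two).mul (cgr (p - 1) (by linarith)))
  have i3 : IntegrableOn (fun x => (p + 1) * pp p (u x - κ) * ‖gradient u x‖) S :=
    bdd_int hSb _ ((continuous_const.mul (cpp p (by linarith))).mul hgc.norm)
  set J := ∫ x in S, pp 1 (u x - κ) * ‖gradient u x‖ ^ p with hJ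
  set N := ∫ x in S, N1 x with hN
  have hNE : ∀ x ∈ S, gradient u x ≠ 0 → N1 x = pp (p + 1) (u x - κ) := by
    intro x hx hg
    by_cases hk : κ < u x
    · exact indicator_of_mem (show x ∈ E j from ⟨hx, hk, hg⟩) _
    · have : x ∉ E j := fun h => hk h.2.1
      show (E j).indicator _ x = _
      rw [indicator_of_notMem this, pp_zero (by linarith) (by linarith)]
  have hN1nn : ∀ x, 0 ≤ N1 x := fun x => indicator_nonneg (fun _ _ => pp_nonneg _ _) x
  have hN0 : 0 ≤ N := integral_nonneg hN1nn
  have step1 : B * ∫ x in S, pp 2 (u x - κ) * ‖gradient u x‖ ^ (p - 1) ≤ C₁ * J + C' * N := by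
    rw [hJ, hN, ← integral_const_mul, ← integral_const_mul, ← integral_const_mul,
      ← integral_add (iJ.const_mul _) (iN.const_mul _)]
    apply setIntegral_mono_on (i2.const_mul _) ((iJ.const_mul _).add (iN.const_mul _)) hSm
    intro x hx
    show B * (pp 2 (u x - κ) * ‖gradient u x‖ ^ (p - 1)) ≤
      C₁ * (pp 1 (u x - κ) * ‖gradient u x‖ ^ p) + C' * N1 x
    by_cases hg : gradient u x = 0
    · simp only [hg, norm_zero, Real.zero_rpow (by linarith : p - 1 ≠ 0), mul_zero]
      have := hN1nn x
      have : 0 ≤ pp 1 (u x - κ) * 0 ^ p := mul_nonneg (hw0 x) (by positivity)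
      positivity
    · rw [hNE x hx hg, powmul p 1 _ (by linarith) one_pos, show (2:ℝ) = 1 + 1 by norm_num,
        powmul 1 1 _ one_pos one_pos, ← powpow p]
      have := mul_le_mul_of_nonneg_left
        (young_aux hp hB hC₁ (hw0 x) (norm_nonneg (gradient u x))) (hw0 x)
      rw [← hC'] at this
      linarith
  have step2 : C₁ * J ≤ C' * N := by linarith
  have step3 : ∫ x in S, (p + 1) * pp p (u x - κ) * ‖gradient u x‖ ≤ (p + 1) * (N + J) := by
    rw [hJ, hN, ← integral_add iN iJ, ← integral_const_mul]
    apply setIntegral_mono_on i3 ((iN.add iJ).const_mul _) hSm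
    intro x hx
    rw [mul_assoc]
    apply mul_le_mul_of_nonneg_left _ (by linarith)
    show pp p (u x - κ) * ‖gradient u x‖ ≤ N1 x + pp 1 (u x - κ) * ‖gradient u x‖ ^ p
    by_cases hg : gradient u x = 0
    · simp only [hg, norm_zero, mul_zero]
      have := hN1nn x
      have : 0 ≤ pp 1 (u x - κ) * 0 ^ p := mul_nonneg (hw0 x) (by positivity)
      positivity
    · have e : pp p (u x - κ) = pp 1 (u x - κ) * pp (p - 1) (u x - κ) := by
        rw [← powmul 1 (p-1) _ one_pos (by linarith)]; congr 1; ring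
      rw [hNE x hx hg, powmul p 1 _ (by linarith) one_pos]
      have := mul_le_mul_of_nonneg_left
        (young_aux2 hp (hw0 x) (norm_nonneg (gradient u x))) (hw0 x)
      rw [powpow, powpow] at this
      rw [e] at *
      linarith
  have step4 : ∫ x in S, (p + 1) * pp p (u x - κ) * ‖gradient u x‖ ≤ D * N := by
    have : J ≤ C' / C₁ * N := by
      rw [div_mul_eq_mul_div, le_div_iff₀ hC₁]; linarith
    have h2 : (p + 1) * (N + J) ≤ (p + 1) * (N + C' / C₁ * N) := by
      apply mul_le_mul_of_nonneg_left _ (by linarith)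
      linarith
    rw [hD]; linarith
  -- GNS
  let f : Euc n → ℝ := fun x => pp (p + 1) (u x - κ)
  have hf : ContDiff ℝ 1 f := (pp_contDiff (by linarith)).comp hvd
  have hgf : ∀ x, gradient f x = ((p + 1) * pp p (u x - κ)) • gradient u x := by
    intro x
    have := pp_grad (s := p + 1) (by linarith) _ hvd x
    rw [hgv, add_sub_cancel_right] at this
    exact this
  let K := closedBall (0 : Euc n) r ∩ {x | κ ≤ u x}
  have hK : IsCompact K := (isCompact_closedBall _ _).inter_right
    (isClosed_le continuous_const hu.continuous)
  have hKS : K ⊆ S := fun x hx => inS x hx.1 ((hkm j).trans_le hx.2)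
  have hfz : ∀ x ∈ S, x ∉ K → f x = 0 := by
    intro x hx hxK
    apply pp_zero (by linarith)
    by_contra h
    exact hxK ⟨ball_subset_closedBall hx, by show κ ≤ u x; linarith⟩
  have hgr : ∫⁻ x in S, ‖gradient f x‖ₑ ≤ ENNReal.ofReal (D * N) := by
    refine le_trans (le_of_eq ?_) (ENNReal.ofReal_le_ofReal step4)
    rw [ofReal_integral_eq_lintegral_ofReal i3 (by
      filter_upwards with x
      have := pp_nonneg p (u x - κ)
      have := norm_nonneg (gradient u x)
      have : 0 ≤ p + 1 := by linarith
      show 0 ≤ (p + 1) * pp p (u x - κ) * ‖gradient u x‖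
      positivity)]
    congr 1; ext x
    rw [← ofReal_norm, hgf, norm_smul, Real.norm_of_nonneg (mul_nonneg (by linarith) (pp_nonneg _ _))]
  have hNl : ENNReal.ofReal N = ∫⁻ x in E j, ‖f x‖ₑ := by
    rw [hN]
    have : ∫ x in S, N1 x = ∫ x in E j, f x := by
      rw [setIntegral_indicator (hEm j), inter_eq_self_of_subset_right inter_subset_left]
    rw [this, ofReal_integral_eq_lintegral_ofReal
      (bdd_int (hSb.subset inter_subset_left) _ hf.continuous)
      (by filter_upwards with x using pp_nonneg _ _)]
    congr 1; ext x
    rw [← ofReal_norm, Real.norm_of_nonneg (pp_nonneg _ _)]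
  have hmain := hG S K (E j) f isOpen_ball hK hKS hf hfz (hEm j) inter_subset_left
  have hN00 : N = 0 := by
    by_contra hne
    have hNpos : 0 < N := lt_of_le_of_ne hN0 (Ne.symm hne)
    rw [← hNl] at hmain
    have h1 := hmain.trans (mul_le_mul_right hgr _)
    rw [ENNReal.ofReal_mul hD0, ← mul_assoc] at h1
    have hp0 : ENNReal.ofReal N ≠ 0 := by simpa using hNpos
    have h2 := ENNReal.mul_lt_mul_left hp0 ENNReal.ofReal_ne_top hj
    rw [one_mul] at h2
    exact absurd h1 (not_le.2 h2)
  rw [hN00, mul_zero, ENNReal.ofReal_zero] at hgr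
  have hmain2 := hG S K S f isOpen_ball hK hKS hf hfz hSm subset_rfl
  rw [nonpos_iff_eq_zero.1 hgr, mul_zero, nonpos_iff_eq_zero,
    lintegral_eq_zero_iff (hf.continuous.measurable.enorm)] at hmain2
  have hzS : z ∈ S := inS z hz hzm
  have hae : f =ᵐ[volume.restrict S] fun _ => (0:ℝ) := by
    filter_upwards [hmain2] with x hx
    simpa using hx
  have := Measure.eqOn_open_of_ae_eq hae isOpen_ball hf.continuous.continuousOn continuousOn_const hzS
  have hpos : 0 < f z := by
    show 0 < pp (p+1) (u z - κ)
    unfold pp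
    apply Real.rpow_pos_of_pos
    exact lt_max_of_lt_left (by have := hkz j; linarith)
  exact absurd this hpos.ne'

lemma smp_core {n : ℕ} {p ρ T : ℝ} (hp : 1 < p) (hρ : 0 < ρ) (hT : 0 < T) (x₀ : Euc n)
    (u : Euc n → ℝ) (hu : ContDiff ℝ 1 u) (hg : gradient u x₀ = 0)
    (H : ∀ s : ℝ, 1 < s → ∃ C : ℝ, 0 ≤ C ∧ ∀ ε : ℝ, 0 < ε → ε < 1 →
      ∫ x in ball x₀ ρ, pp s (u x - u x₀ + ε - ε * (T * ‖x - x₀‖ ^ 2)) ≤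
        C * ε ^ p * ∫ x in ball x₀ ρ, pp (s - 1) (u x - u x₀ + ε - ε * (T * ‖x - x₀‖ ^ 2))) :
    False := by
  set s : ℝ := (n + 1) / (p - 1) + 2 with hs
  have hp1 : 0 < p - 1 := by linarith
  have hs1 : 1 < s := by
    have : 0 < ((n:ℝ) + 1) / (p - 1) := by positivity
    linarith
  have hsn : (n : ℝ) < p * s - s - n + n := by
    have : (p - 1) * s = n + 1 + 2 * (p - 1) := by rw [hs]; field_simp
    nlinarith
  obtain ⟨C, hC, H⟩ := H s hs1
  set S := ball x₀ ρ with hS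
  have hSb : Bornology.IsBounded S := isBounded_ball
  set ω := volume.real (ball (0 : Euc n) 1) with hω
  have hω0 : 0 < ω := ENNReal.toReal_pos (measure_ball_pos _ _ one_pos).ne' measure_ball_lt_top.ne
  set V := volume.real S with hV
  -- upper bound
  have upper : ∀ ε : ℝ, 0 < ε → ε < 1 →
      ∫ x in S, pp s (u x - u x₀ + ε - ε * (T * ‖x - x₀‖ ^ 2)) ≤ 2 * (2 * C * ε ^ p) ^ s * V := by
    intro ε h0 h1
    have hcv : Continuous fun x => u x - u x₀ + ε - ε * (T * ‖x - x₀‖ ^ 2) := by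
      have := hu.continuous; fun_prop
    have i1 : IntegrableOn (fun x => pp s (u x - u x₀ + ε - ε * (T * ‖x - x₀‖ ^ 2))) S :=
      bdd_int hSb _ ((pp_cont (by linarith)).comp hcv)
    have i2 : IntegrableOn (fun x => pp (s - 1) (u x - u x₀ + ε - ε * (T * ‖x - x₀‖ ^ 2))) S :=
      bdd_int hSb _ ((pp_cont (by linarith)).comp hcv)
    have ic : IntegrableOn (fun _ : Euc n => (2 * C * ε ^ p) ^ s) S := bdd_int hSb _ continuous_const
    have h := H ε h0 h1
    have hle : C * ε ^ p * ∫ x in S, pp (s - 1) (u x - u x₀ + ε - ε * (T * ‖x - x₀‖ ^ 2)) ≤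
        (1 / 2) * (∫ x in S, pp s (u x - u x₀ + ε - ε * (T * ‖x - x₀‖ ^ 2))) +
        (2 * C * ε ^ p) ^ s * V := by
      have : (2 * C * ε ^ p) ^ s * V = ∫ x in S, (2 * C * ε ^ p) ^ s := by
        rw [setIntegral_const, smul_eq_mul, mul_comm]
      rw [this, ← integral_const_mul, ← integral_const_mul, ← integral_add (i1.const_mul _) ic]
      apply setIntegral_mono (i2.const_mul _) ((i1.const_mul _).add ic)
      intro x
      have := split_aux hs1 (le_max_right (u x - u x₀ + ε - ε * (T * ‖x - x₀‖ ^ 2)) 0)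
        (by positivity : 0 ≤ 2 * C * ε ^ p)
      show C * ε ^ p * pp (s - 1) (u x - u x₀ + ε - ε * (T * ‖x - x₀‖ ^ 2)) ≤
        1 / 2 * pp s (u x - u x₀ + ε - ε * (T * ‖x - x₀‖ ^ 2)) + (2 * C * ε ^ p) ^ s
      unfold pp
      linarith
    linarith
  -- lower bound
  have hfd : HasFDerivAt u (0 : Euc n →L[ℝ] ℝ) x₀ := by
    have h1 := ((hu.differentiable one_ne_zero) x₀).hasFDerivAt
    have h2 : fderiv ℝ u x₀ = 0 := by
      unfold gradient at hg
      simpa using hg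
    rwa [h2] at h1
  have hlo := (hasFDerivAt_iff_isLittleO.1 hfd).bound one_pos
  obtain ⟨d, hd, hdb⟩ := Metric.eventually_nhds_iff.1 hlo
  have lower : ∀ ε : ℝ, 0 < ε → ε < 1 → ε < d → ε < ρ → ε * T < 1 →
      (ε / 2) ^ s * ((ε / 4) ^ n * ω) ≤ ∫ x in S, pp s (u x - u x₀ + ε - ε * (T * ‖x - x₀‖ ^ 2)) := by
    intro ε h0 h1 h2 h3 h4
    have hcv : Continuous fun x => u x - u x₀ + ε - ε * (T * ‖x - x₀‖ ^ 2) := by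
      have := hu.continuous; fun_prop
    have i1 : IntegrableOn (fun x => pp s (u x - u x₀ + ε - ε * (T * ‖x - x₀‖ ^ 2))) S :=
      bdd_int hSb _ ((pp_cont (by linarith)).comp hcv)
    have hsub : ball x₀ (ε / 4) ⊆ S := ball_subset_ball (by linarith)
    have hvol : (ε / 4) ^ n * ω = volume.real (ball x₀ (ε / 4)) := by
      rw [Measure.real, Measure.addHaar_ball_of_pos _ _ (by positivity), ENNReal.toReal_mul,
        ENNReal.toReal_ofReal (by positivity), finrank_euclideanSpace_fin]
      rfl
    have e1 : (ε / 2) ^ s * ((ε / 4) ^ n * ω) = ∫ x in ball x₀ (ε / 4), (ε / 2) ^ s := by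
      rw [setIntegral_const, smul_eq_mul, hvol, mul_comm]
    rw [e1]
    refine le_trans (setIntegral_mono_on (bdd_int isBounded_ball _ continuous_const)
      (i1.mono_set hsub) measurableSet_ball ?_)
      (setIntegral_mono_set i1 (by filter_upwards with x using pp_nonneg _ _) hsub.eventuallyLE)
    intro x hx
    unfold pp
    apply Real.rpow_le_rpow (by positivity) _ (by linarith)
    apply le_max_of_le_left
    have hx' : dist x x₀ < ε / 4 := mem_ball.1 hx
    have hb := hdb (show dist x x₀ < d by linarith)
    simp only [_root_.zero_apply, sub_zero, one_mul] at hb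
    rw [dist_eq_norm] at hx'
    have hb2 := (abs_le.1 (Real.norm_eq_abs _ ▸ hb)).1
    have hn0 := norm_nonneg (x - x₀)
    have hsq : ‖x - x₀‖ ^ 2 ≤ ε / 4 := by nlinarith
    have : ε * (T * ‖x - x₀‖ ^ 2) ≤ ε / 4 := by
      have : ε * T * ‖x - x₀‖ ^ 2 ≤ 1 * (ε / 4) := mul_le_mul h4.le hsq (by positivity) (by positivity)
      linarith
    linarith
  -- combine
  set γ := p * s - s - n with hγ
  have hγ0 : 0 < γ := by linarith [hsn, hs1, show (p-1)*s = n + 1 + 2*(p-1) by rw [hs]; field_simp]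
  set c1 := (1 / 2 : ℝ) ^ s * ((1 / 4) ^ n * ω) with hc1
  have hc10 : 0 < c1 := by positivity
  set c2 := 2 * (2 * C) ^ s * V with hc2
  have comb : ∀ ε : ℝ, 0 < ε → ε < 1 → ε < d → ε < ρ → ε * T < 1 → c1 ≤ c2 * ε ^ γ := by
    intro ε h0 h1 h2 h3 h4
    have h := (lower ε h0 h1 h2 h3 h4).trans (upper ε h0 h1)
    have a1 : (ε / 2) ^ s * ((ε / 4) ^ n * ω) = c1 * ε ^ (s + n) := by
      rw [div_eq_mul_one_div ε 2, div_eq_mul_one_div ε 4, Real.mul_rpow h0.le (by norm_num), mul_pow,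
        Real.rpow_add h0 s n, Real.rpow_natCast]
      ring
    have a2 : 2 * (2 * C * ε ^ p) ^ s * V = c2 * ε ^ γ * ε ^ (s + n) := by
      rw [Real.mul_rpow (by positivity) (by positivity), ← Real.rpow_mul h0.le, mul_assoc c2,
        ← Real.rpow_add h0, hγ]
      rw [show p * s - s - (n:ℝ) + (s + n) = p * s by ring]
      ring
    rw [a1, a2] at h
    exact le_of_mul_le_mul_right h (by positivity)
  have tend : Tendsto (fun ε : ℝ => c2 * ε ^ γ) (𝓝[>] 0) (𝓝 0) := by
    have : ContinuousAt (fun ε : ℝ => c2 * ε ^ γ) 0 :=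
      (Real.continuousAt_rpow_const 0 γ (Or.inr hγ0.le)).const_mul c2
    have h := this.tendsto
    simp only [Real.zero_rpow hγ0.ne', mul_zero] at h
    exact h.mono_left nhdsWithin_le_nhds
  have lt1 : ∀ y : ℝ, 0 < y → ∀ᶠ ε : ℝ in 𝓝[>] 0, ε < y := fun y hy =>
    nhdsWithin_le_nhds (Iio_mem_nhds hy)
  obtain ⟨ε, h⟩ := ((tend.eventually_lt_const hc10).and ((lt1 1 one_pos).and ((lt1 d hd).and
    ((lt1 ρ hρ).and ((lt1 (1 / T) (by positivity)).and self_mem_nhdsWithin))))).exists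
  obtain ⟨g1, g2, g3, g4, g5, g6⟩ := h
  have := comb ε g6 g2 g3 g4 (by rwa [lt_div_iff₀ hT] at g5)
  linarith

lemma inner_int {n : ℕ} {S : Set (Euc n)} (hS : Bornology.IsBounded S) (F G : Euc n → Euc n)
    (hF : LocallyIntegrable F) (hG : Continuous G) : IntegrableOn (fun x => ⟪F x, G x⟫) S := by
  have hK := hS.isCompact_closure
  refine IntegrableOn.mono_set ?_ subset_closure
  obtain ⟨C, hC⟩ := hK.exists_bound_of_continuousOn hG.continuousOn
  refine Integrable.mono' ((hF.integrableOn_isCompact hK).norm.mul_const C)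
    ((hF.aestronglyMeasurable.inner hG.aestronglyMeasurable).restrict) ?_
  filter_upwards [ae_restrict_mem hK.measurableSet] with x hx
  exact (norm_inner_le_norm _ _).trans (mul_le_mul_of_nonneg_left (hC x hx) (norm_nonneg _))

lemma mul_int {n : ℕ} {S : Set (Euc n)} (hS : Bornology.IsBounded S) (F G : Euc n → ℝ)
    (hF : LocallyIntegrable F) (hG : Continuous G) : IntegrableOn (fun x => F x * G x) S := by
  have hK := hS.isCompact_closure
  refine IntegrableOn.mono_set ?_ subset_closure
  exact (hF.integrableOn_isCompact hK).mul_continuousOn hG.continuousOn hK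

lemma exists_pos_of_essInf_ne {n : ℕ} (q : Euc n → ℝ) (hq0 : ∀ x, 0 ≤ q x)
    (μ : Measure (Euc n)) (h : essInf q μ ≠ 0) : ∃ c > 0, ∀ᵐ x ∂μ, c ≤ q x := by
  by_contra hcon
  push Not at hcon
  apply h
  rw [essInf_eq_sSup]
  apply le_antisymm
  · apply csSup_le ⟨0, by simp [not_lt.2 (hq0 _)]⟩
    intro a ha
    by_contra h0
    push Not at h0
    refine hcon a h0 ?_
    rw [ae_iff]
    simpa using ha
  · apply Real.sSup_nonneg'
    exact ⟨0, by simp [not_lt.2 (hq0 _)], le_rfl⟩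

lemma grad_v {n : ℕ} (u : Euc n → ℝ) (hu : ContDiff ℝ 1 u) (x₀ : Euc n) (m ε T : ℝ) (x : Euc n) :
    gradient (fun x => u x - m + ε - ε * (T * ‖x - x₀‖ ^ 2)) x =
      gradient u x - (2 * ε * T) • (x - x₀) := by
  apply HasGradientAt.gradient
  rw [hasGradientAt_iff_hasFDerivAt]
  have h1 := ((hu.differentiable one_ne_zero) x).hasGradientAt.hasFDerivAt
  have h2 := ((hasFDerivAt_id x).sub_const x₀).norm_sq
  have h3 := ((h1.sub_const m).add_const ε).sub ((h2.const_mul T).const_mul ε)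
  refine h3.congr_fderiv ?_
  ext y
  simp [inner_sub_left, inner_smul_left]
  ring

theorem wmp_final {n : ℕ} (hn : 2 ≤ n) {p C₁ C₂ α : ℝ} (hp : 1 < p)
    (hC₁ : 0 < C₁) (hα₁ : p - 1 ≤ α)
    (A : Euc n → Euc n → Euc n) (hA : StructCond A p C₁ C₂)
    (b : Euc n → ℝ) (hb0 : ∀ x, 0 ≤ b x) (hbloc : LocBdd b)
    (a : Euc n → ℝ) (ha0 : ∀ x, 0 ≤ a x)
    (u : Euc n → ℝ) (hu : ContDiff ℝ 1 u)
    (hF : LocallyIntegrable fun x => A x (gradient u x))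
    (hc : LocallyIntegrable fun x => b x * ‖gradient u x‖ ^ α)
    (ha : LocallyIntegrable a)
    (hsol : IsWeakSol A b α a Set.univ u) (r m₀ : ℝ)
    (hsph : ∀ x ∈ sphere (0 : Euc n) r, u x ≤ m₀) :
    ∀ x ∈ closedBall (0 : Euc n) r, u x ≤ m₀ := by
  have hgc := grad_cont u hu
  obtain ⟨B1, hB1⟩ := hbloc _ (isCompact_closedBall (0 : Euc n) r)
  obtain ⟨B2, hB2⟩ := (isCompact_closedBall (0 : Euc n) r).exists_bound_of_continuousOn
    (f := fun x => ‖gradient u x‖ ^ (α - p + 1))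
    (hgc.norm.rpow_const fun _ => Or.inr (by linarith)).continuousOn
  have H' : ∀ φ : Euc n → ℝ, ContDiff ℝ (⊤ : ℕ∞) φ → HasCompactSupport φ → (∀ x, 0 ≤ φ x) →
      (∫ x, a x * φ x) ≤ (-(∫ x, ⟪A x (gradient u x), gradient φ x⟫)) +
        ∫ x, (b x * ‖gradient u x‖ ^ α) * φ x := by
    intro φ h1 h2 h3
    simpa using hsol φ h1 h2 (subset_univ _) h3
  refine wmp_core hn hp hC₁ (B := |B1| * |B2|) (by positivity) u hu hsph ?_
  intro k hk
  set S := ball (0 : Euc n) r with hS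
  have hSb : Bornology.IsBounded S := isBounded_ball
  have hvd : ContDiff ℝ 1 fun x => u x - k := hu.sub contDiff_const
  have hgv : ∀ x, gradient (fun x => u x - k) x = gradient u x := by
    intro x; unfold gradient; rw [fderiv_sub_const]
  let f : Euc n → ℝ := fun x => pp 2 (u x - k)
  have hf : ContDiff ℝ 1 f := (pp_contDiff (by norm_num)).comp hvd
  have hgf : ∀ x, gradient f x = (2 * pp 1 (u x - k)) • gradient u x := by
    intro x
    have := pp_grad (s := 2) (by norm_num) _ hvd x
    rw [hgv, show (2:ℝ) - 1 = 1 by norm_num] at this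
    exact this
  let K := closedBall (0 : Euc n) r ∩ {x | k ≤ u x}
  have hK : IsCompact K := (isCompact_closedBall _ _).inter_right
    (isClosed_le continuous_const hu.continuous)
  have hKS : K ⊆ S := by
    intro x hx
    have hx1 := mem_closedBall.1 hx.1
    rcases hx1.lt_or_eq with h | h
    · exact mem_ball.2 h
    · exact absurd (hsph x (mem_sphere.2 h)) (not_le.2 (hk.trans_le hx.2))
  have hfz : ∀ x ∈ S, x ∉ K → f x = 0 := by
    intro x hx hxK
    apply pp_zero (by norm_num)
    by_contra h
    exact hxK ⟨ball_subset_closedBall hx, by show k ≤ u x; linarith⟩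
  have key := test_local a _ _ ha hc hF H' S K isOpen_ball hK hKS f hf
    (fun x _ => pp_nonneg _ _) hfz
  have h0 : 0 ≤ ∫ x in S, a x * f x := integral_nonneg fun x => mul_nonneg (ha0 x) (pp_nonneg _ _)
  have cpp : ∀ s : ℝ, 0 ≤ s → Continuous fun x => pp s (u x - k) := fun s hs =>
    (pp_cont hs).comp hvd.continuous
  have cgr : ∀ s : ℝ, 0 ≤ s → Continuous fun x => ‖gradient u x‖ ^ s := fun s hs =>
    hgc.norm.rpow_const fun _ => Or.inr hs
  have h1 : 2 * C₁ * ∫ x in S, pp 1 (u x - k) * ‖gradient u x‖ ^ p ≤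
      ∫ x in S, ⟪A x (gradient u x), gradient f x⟫ := by
    rw [← integral_const_mul]
    apply setIntegral_mono
      (bdd_int hSb _ (continuous_const.mul ((cpp 1 zero_le_one).mul (cgr p (by linarith)))))
      (inner_int hSb _ _ hF (grad_cont f hf))
    intro x
    have := (hA.2 x (gradient u x)).1
    rw [real_inner_comm] at this
    have h2 := mul_le_mul_of_nonneg_left this
      (mul_nonneg zero_le_two (pp_nonneg 1 (u x - k)))
    show 2 * C₁ * (pp 1 (u x - k) * ‖gradient u x‖ ^ p) ≤ ⟪A x (gradient u x), gradient f x⟫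
    rw [hgf, inner_smul_right]
    linarith
  have h2 : ∫ x in S, (b x * ‖gradient u x‖ ^ α) * f x ≤
      |B1| * |B2| * ∫ x in S, pp 2 (u x - k) * ‖gradient u x‖ ^ (p - 1) := by
    rw [← integral_const_mul]
    apply setIntegral_mono_on (mul_int hSb _ _ hc hf.continuous)
      (bdd_int hSb _ (continuous_const.mul ((cpp 2 zero_le_two).mul (cgr (p-1) (by linarith)))))
      measurableSet_ball
    intro x hx
    have hx' := ball_subset_closedBall hx
    have e : ‖gradient u x‖ ^ α = ‖gradient u x‖ ^ (α - p + 1) * ‖gradient u x‖ ^ (p - 1) := by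
      rw [← Real.rpow_add_of_nonneg (norm_nonneg _) (by linarith) (by linarith)]
      congr 1; ring
    have q1 : b x ≤ |B1| := (hB1 x hx').trans (le_abs_self _)
    have q2 : ‖gradient u x‖ ^ (α - p + 1) ≤ |B2| :=
      (le_abs_self _).trans ((hB2 x hx').trans (le_abs_self _))
    have q3 : b x * ‖gradient u x‖ ^ (α - p + 1) ≤ |B1| * |B2| :=
      mul_le_mul q1 q2 (by positivity) (by positivity)
    have q4 : 0 ≤ pp 2 (u x - k) * ‖gradient u x‖ ^ (p - 1) :=
      mul_nonneg (pp_nonneg _ _) (by positivity)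
    have := mul_le_mul_of_nonneg_right q3 q4
    show b x * ‖gradient u x‖ ^ α * pp 2 (u x - k) ≤
      |B1| * |B2| * (pp 2 (u x - k) * ‖gradient u x‖ ^ (p - 1))
    rw [e]
    linarith
  linarith

lemma main_aux (n : ℕ) (hn : 2 ≤ n) (p C₁ C₂ α : ℝ) (hp : 1 < p)
    (hC₁ : 0 < C₁) (hC₂ : 0 < C₂) (hα₁ : p - 1 ≤ α)
    (A : Euc n → Euc n → Euc n) (hA : StructCond A p C₁ C₂)
    (b : Euc n → ℝ) (hbm : Measurable b) (hb0 : ∀ x, 0 ≤ b x) (hbloc : LocBdd b)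
    (q : Euc n → ℝ) (hqm : Measurable q) (hq0 : ∀ x, 0 ≤ q x) (hqloc : LocBdd q)
    (g : ℝ → ℝ) (hg : ContinuousOn g (Set.Ici 0)) (hg0 : ∀ t ∈ Set.Ici (0 : ℝ), 0 ≤ g t)
    (hgpos : ∀ t : ℝ, 0 < t → 0 < g t)
    (u : Euc n → ℝ) (hu : ContDiff ℝ 1 u) (hu0 : ∀ x, 0 ≤ u x)
    (hsol : IsWeakSol A b α (fun x => q x * g (u x)) Set.univ u)
    (r₁ r₂ : ℝ) (hr₁ : 0 < r₁) (hr : r₁ < r₂)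
    (hM : sphMax u r₁ = sphMax u r₂) (hMpos : 0 < sphMax u r₂) :
    essInf q (volume.restrict (Ann n r₁ r₂)) = 0 := by
  have : Nontrivial (Euc n) := by
    have : Nonempty (Fin n) := ⟨⟨0, by omega⟩⟩
    infer_instance
  by_contra hne
  obtain ⟨c₀, hc₀, hqc⟩ := exists_pos_of_essInf_ne q hq0 _ hne
  have hgc := grad_cont u hu
  have hgu : Continuous fun x => g (u x) := hg.comp_continuous hu.continuous hu0
  have cgr : ∀ s : ℝ, 0 ≤ s → Continuous fun x => ‖gradient u x‖ ^ s := fun s hs =>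
    hgc.norm.rpow_const fun _ => Or.inr hs
  have ha0 : ∀ x, 0 ≤ q x * g (u x) := fun x => mul_nonneg (hq0 x) (hg0 _ (hu0 x))
  have lint : ∀ f : Euc n → ℝ, Measurable f → (∀ x, 0 ≤ f x) → LocBdd f → LocallyIntegrable f := by
    intro f h1 h2 h3
    apply locint f h1.aestronglyMeasurable
    intro K hK
    obtain ⟨C, hC⟩ := h3 K hK
    exact ⟨C, fun x hx => by rw [Real.norm_of_nonneg (h2 x)]; exact hC x hx⟩
  have lmul : ∀ f h : Euc n → ℝ, LocBdd f → (∀ x, 0 ≤ f x) → Continuous h → (∀ x, 0 ≤ h x) →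
      LocBdd fun x => f x * h x := by
    intro f h h1 h2 h3 h4 K hK
    obtain ⟨C, hC⟩ := h1 K hK
    obtain ⟨D, hD⟩ := hK.exists_bound_of_continuousOn h3.continuousOn
    refine ⟨|C| * |D|, fun x hx => mul_le_mul ((hC x hx).trans (le_abs_self _))
      ((le_abs_self _).trans ((hD x hx).trans (le_abs_self _))) (h4 x) (abs_nonneg _)⟩
  have ha : LocallyIntegrable fun x => q x * g (u x) :=
    lint _ (hqm.mul hgu.measurable) ha0 (lmul _ _ hqloc hq0 hgu fun x => hg0 _ (hu0 x))
  have hc : LocallyIntegrable fun x => b x * ‖gradient u x‖ ^ α :=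
    lint _ (hbm.mul (cgr α (by linarith)).measurable)
      (fun x => mul_nonneg (hb0 x) (by positivity))
      (lmul _ _ hbloc hb0 (cgr α (by linarith)) fun x => by positivity)
  have hF : LocallyIntegrable fun x => A x (gradient u x) := by
    apply locint
    · exact (hA.1.comp (measurable_id.prodMk hgc.measurable)).aestronglyMeasurable
    · intro K hK
      obtain ⟨D, hD⟩ := hK.exists_bound_of_continuousOn (cgr (p - 1) (by linarith)).continuousOn
      refine ⟨C₂ * D, fun x hx => (hA.2 x _).2.trans (mul_le_mul_of_nonneg_left ?_ hC₂.le)⟩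
      exact (le_abs_self _).trans (hD x hx)
  have H' : ∀ φ : Euc n → ℝ, ContDiff ℝ (⊤ : ℕ∞) φ → HasCompactSupport φ → (∀ x, 0 ≤ φ x) →
      (∫ x, q x * g (u x) * φ x) ≤ (-(∫ x, ⟪A x (gradient u x), gradient φ x⟫)) +
        ∫ x, (b x * ‖gradient u x‖ ^ α) * φ x := by
    intro φ h1 h2 h3
    simpa using hsol φ h1 h2 (subset_univ _) h3
  -- maxima
  have hle : ∀ r, ∀ x ∈ sphere (0 : Euc n) r, u x ≤ sphMax u r := fun r x hx =>
    le_csSup ((isCompact_sphere _ _).bddAbove_image hu.continuous.continuousOn) (mem_image_of_mem _ hx)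
  have hat : ∀ r, 0 ≤ r → ∃ x ∈ sphere (0 : Euc n) r, sphMax u r = u x := fun r h0 =>
    (isCompact_sphere _ _).exists_sSup_image_eq (NormedSpace.sphere_nonempty.2 h0)
      hu.continuous.continuousOn
  have wmp : ∀ r, ∀ x ∈ closedBall (0 : Euc n) r, u x ≤ sphMax u r := fun r =>
    wmp_final hn hp hC₁ hα₁ A hA b hb0 hbloc _ ha0 u hu hF hc ha hsol r _ (hle r)
  set M := sphMax u r₂ with hMdef
  obtain ⟨x₁, hx₁, hx₁M⟩ := hat r₁ hr₁.le
  obtain ⟨x₀, hx₀, hx₀M⟩ := hat ((r₁ + r₂) / 2) (by linarith)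
  rw [mem_sphere_zero_iff_norm] at hx₁ hx₀
  have e0 : u x₀ = M := by
    apply le_antisymm
    · exact wmp r₂ x₀ (by rw [mem_closedBall_zero_iff]; linarith)
    · rw [← hx₀M, ← hM, hx₁M]
      exact wmp _ x₁ (by rw [mem_closedBall_zero_iff]; linarith)
  have hAo : IsOpen (Ann n r₁ r₂) :=
    (isOpen_lt continuous_const continuous_norm).inter (isOpen_lt continuous_norm continuous_const)
  have hx₀A : x₀ ∈ Ann n r₁ r₂ := ⟨by linarith, by linarith⟩
  have hAM : ∀ x ∈ Ann n r₁ r₂, u x ≤ M := fun x hx =>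
    wmp r₂ x (by rw [mem_closedBall_zero_iff]; exact hx.2.le)
  have hg₀ : gradient u x₀ = 0 := by
    have hloc : IsLocalMax u x₀ := by
      filter_upwards [hAo.mem_nhds hx₀A] with w hw
      rw [e0]; exact hAM w hw
    unfold gradient; rw [hloc.fderiv_eq_zero]; simp
  have hgM : 0 < g M := hgpos M hMpos
  set c' := c₀ * (g M / 2) with hc'
  have hc'0 : 0 < c' := by positivity
  obtain ⟨B, hB⟩ := hbloc _ (isCompact_closedBall (0 : Euc n) r₂)
  have n1 : ∀ᶠ x in 𝓝 x₀, g M / 2 < g (u x) := by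
    apply hgu.continuousAt.eventually_const_lt
    show g M / 2 < g (u x₀)
    rw [e0]; linarith
  have n2 : ∀ᶠ x in 𝓝 x₀, |B| * ‖gradient u x‖ ^ α < c' / 2 := by
    apply ((continuous_const.mul (cgr α (by linarith))).continuousAt (x := x₀)).eventually_lt_const
    show |B| * ‖gradient u x₀‖ ^ α < c' / 2
    rw [hg₀, norm_zero, Real.zero_rpow (by linarith), mul_zero]; positivity
  obtain ⟨ρ, hρ, hball⟩ := Metric.eventually_nhds_iff_ball.1 (n1.and (n2.and (hAo.mem_nhds hx₀A)))
  set S := ball x₀ ρ with hS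
  have hSb : Bornology.IsBounded S := isBounded_ball
  have hSA : S ⊆ Ann n r₁ r₂ := fun x hx => (hball x hx).2.2
  set T := 4 / ρ ^ 2 with hT
  have hT0 : 0 < T := by positivity
  refine smp_core hp hρ hT0 x₀ u hu hg₀ ?_
  intro s hs
  set B' := 2 * T * C₂ * ρ with hB'
  have hB'0 : 0 ≤ B' := by positivity
  set C3 := B' * (B' / C₁) ^ (p - 1) with hC3
  have hC30 : 0 ≤ C3 := by positivity
  refine ⟨2 * s * C3 / c', by positivity, ?_⟩
  intro ε hε hε1
  set v : Euc n → ℝ := fun x => u x - u x₀ + ε - ε * (T * ‖x - x₀‖ ^ 2) with hv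
  have hvd : ContDiff ℝ 1 v :=
    ((hu.sub contDiff_const).add contDiff_const).sub (contDiff_const.mul
      (contDiff_const.mul ((contDiff_id.sub contDiff_const).norm_sq ℝ)))
  let f : Euc n → ℝ := fun x => pp s (v x)
  have hf : ContDiff ℝ 1 f := (pp_contDiff hs).comp hvd
  have hgf : ∀ x, gradient f x = (s * pp (s - 1) (v x)) • (gradient u x - (2 * ε * T) • (x - x₀)) := by
    intro x
    rw [← grad_v u hu x₀ (u x₀) ε T x]
    exact pp_grad hs v hvd x
  have hfz : ∀ x ∈ S, x ∉ closedBall x₀ (ρ / 2) → f x = 0 := by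
    intro x hx hxK
    apply pp_zero (by linarith)
    rw [mem_closedBall, dist_eq_norm, not_le] at hxK
    have h1 := hAM x (hSA hx)
    have h2 : (ρ / 2) ^ 2 ≤ ‖x - x₀‖ ^ 2 := by gcongr
    have h3 : 1 ≤ T * ‖x - x₀‖ ^ 2 := by
      rw [hT, div_mul_eq_mul_div, le_div_iff₀ (by positivity)]; linarith
    have h4 : ε * 1 ≤ ε * (T * ‖x - x₀‖ ^ 2) := mul_le_mul_of_nonneg_left h3 hε.le
    simp only [hv]; rw [e0]; linarith
  have key := test_local _ _ _ ha hc hF H' S (closedBall x₀ (ρ / 2)) isOpen_ball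
    (isCompact_closedBall _ _) (closedBall_subset_ball (by linarith)) f hf
    (fun x _ => pp_nonneg _ _) hfz
  have cpp : ∀ s : ℝ, 0 ≤ s → Continuous fun x => pp s (v x) := fun s hs =>
    (pp_cont hs).comp hvd.continuous
  have fi : IntegrableOn f S := bdd_int hSb _ hf.continuous
  have h1 : c' * ∫ x in S, f x ≤ ∫ x in S, q x * g (u x) * f x := by
    rw [← integral_const_mul]
    apply setIntegral_mono_on_ae (fi.const_mul _) (mul_int hSb _ _ ha hf.continuous) measurableSet_ball
    rw [ae_restrict_iff' hAo.measurableSet] at hqc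
    filter_upwards [hqc] with x hx hxS
    apply mul_le_mul_of_nonneg_right _ (pp_nonneg _ _)
    exact mul_le_mul (hx (hSA hxS)) (hball x hxS).1.le (by positivity) (hq0 x)
  have h2 : ∫ x in S, (b x * ‖gradient u x‖ ^ α) * f x ≤ c' / 2 * ∫ x in S, f x := by
    rw [← integral_const_mul]
    apply setIntegral_mono_on (mul_int hSb _ _ hc hf.continuous) (fi.const_mul _) measurableSet_ball
    intro x hx
    apply mul_le_mul_of_nonneg_right _ (pp_nonneg _ _)
    refine le_trans (mul_le_mul_of_nonneg_right ?_ (by positivity)) (hball x hx).2.1.le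
    exact (hB x (by rw [mem_closedBall_zero_iff]; exact (hSA hx).2.le)).trans (le_abs_self _)
  have h3 : -(∫ x in S, ⟪A x (gradient u x), gradient f x⟫) ≤
      s * C3 * ε ^ p * ∫ x in S, pp (s - 1) (v x) := by
    rw [← integral_neg, ← integral_const_mul]
    apply setIntegral_mono_on (inner_int hSb _ _ hF (grad_cont f hf)).neg
      ((bdd_int hSb _ (cpp (s-1) (by linarith))).const_mul _) measurableSet_ball
    intro x hx
    rw [mem_ball, dist_eq_norm] at hx
    have q1 := (hA.2 x (gradient u x)).1
    have q2 := (hA.2 x (gradient u x)).2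
    rw [real_inner_comm] at q1
    have q3 : ⟪A x (gradient u x), x - x₀⟫ ≤ C₂ * ‖gradient u x‖ ^ (p - 1) * ρ :=
      (real_inner_le_norm _ _).trans (mul_le_mul q2 hx.le (norm_nonneg _) (by positivity))
    have q4 := young_aux hp hB'0 hC₁ hε.le (norm_nonneg (gradient u x))
    rw [← hC3] at q4
    have q5 := mul_le_mul_of_nonneg_left q3 (by positivity : 0 ≤ 2 * ε * T)
    have q6 : -(⟪A x (gradient u x), gradient u x⟫ - 2 * ε * T * ⟪A x (gradient u x), x - x₀⟫)
        ≤ C3 * ε ^ p := by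
      have : 2 * ε * T * (C₂ * ‖gradient u x‖ ^ (p - 1) * ρ) = B' * ε * ‖gradient u x‖ ^ (p - 1) := by
        rw [hB']; ring
      linarith
    have q7 := mul_le_mul_of_nonneg_left q6
      (mul_nonneg (by linarith : (0:ℝ) ≤ s) (pp_nonneg (s - 1) (v x)))
    show -⟪A x (gradient u x), gradient f x⟫ ≤ s * C3 * ε ^ p * pp (s - 1) (v x)
    rw [hgf, inner_smul_right, inner_sub_right, inner_smul_right]
    linarith
  have h4 : c' * ∫ x in S, f x ≤ 2 * (s * C3 * ε ^ p * ∫ x in S, pp (s - 1) (v x)) := by linarith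
  show ∫ x in S, f x ≤ 2 * s * C3 / c' * ε ^ p * ∫ x in S, pp (s - 1) (v x)
  have h5 : 2 * s * C3 / c' * ε ^ p * ∫ x in S, pp (s - 1) (v x) =
      (2 * (s * C3 * ε ^ p * ∫ x in S, pp (s - 1) (v x))) / c' := by ring
  rw [h5, le_div_iff₀ hc'0]
  linarith

/-- Lemma 3.0: if `M(r₁;u) = M(r₂;u) > 0` then `ess inf_{r₁<|x|<r₂} q = 0`. -/
theorem stmt_3 (n : ℕ) (hn : 2 ≤ n) (p C₁ C₂ α : ℝ) (hp : 1 < p)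
    (hC₁ : 0 < C₁) (hC₂ : 0 < C₂) (hα₁ : p - 1 ≤ α) (hα₂ : α ≤ p)
    (A : Euc n → Euc n → Euc n) (hA : StructCond A p C₁ C₂)
    (b : Euc n → ℝ) (hbm : Measurable b) (hb0 : ∀ x, 0 ≤ b x) (hbloc : LocBdd b)
    (q : Euc n → ℝ) (hqm : Measurable q) (hq0 : ∀ x, 0 ≤ q x) (hqloc : LocBdd q)
    (g : ℝ → ℝ) (hg : ContinuousOn g (Set.Ici 0)) (hg0 : ∀ t ∈ Set.Ici (0 : ℝ), 0 ≤ g t)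
    (hgpos : ∀ t : ℝ, 0 < t → 0 < g t)
    (u : Euc n → ℝ) (hu : ContDiff ℝ 1 u) (hu0 : ∀ x, 0 ≤ u x)
    (hsol : IsWeakSol A b α (fun x => q x * g (u x)) Set.univ u)
    (r₁ r₂ : ℝ) (hr₁ : 0 < r₁) (hr : r₁ < r₂)
    (hM : sphMax u r₁ = sphMax u r₂) (hMpos : 0 < sphMax u r₂) :
    essInf q (volume.restrict (Ann n r₁ r₂)) = 0 := by
  exact main_aux n hn p C₁ C₂ α hp hC₁ hC₂ hα₁ A hA b hbm hb0 hbloc q hqm hq0 hqloc g hg hg0 hgpos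
    u hu hu0 hsol r₁ r₂ hr₁ hr hM hMpos
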